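/- Let L be an orthomodular lattice and a, b ∈ L. If every quasipoint of L containing a also contains b (i.e. Q_a(L) ⊆ Q_b(L)), then a ≤ b. In particular, Q_a(L) = Q_b(L) implies a = b. -/

import Mathlib

/-- A filter base in an ordered set `L` with least element `⊥`:
a nonempty subset not containing `⊥` in which any two elements have a common lower bound. -/
def IsFilterBase {L : Type*} [PartialOrder L] [OrderBot L] (B : Set L) : Prop :=
  B.Nonempty ∧ ⊥ ∉ B ∧ ∀ a ∈ B, ∀ b ∈ B, ∃ c ∈ B, c ≤ a ∧ c ≤ b

/-- A quasipoint is a maximal filter base. -/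
def IsQuasipoint {L : Type*} [PartialOrder L] [OrderBot L] (B : Set L) : Prop :=
  IsFilterBase B ∧ ∀ C : Set L, IsFilterBase C → B ⊆ C → C = B

/-- The set of quasipoints of `L`. -/
def Quasipoint (L : Type*) [PartialOrder L] [OrderBot L] : Type _ :=
  {B : Set L // IsQuasipoint B}

/-- The basic (cl)open set of the Stone spectrum determined by `a : L`. -/
def Qset {L : Type*} [PartialOrder L] [OrderBot L] (a : L) : Set (Quasipoint L) :=
  {B | a ∈ B.1}

/-- The Stone topology on the set of quasipoints, generated by the sets `Qset a`. -/
instance {L : Type*} [PartialOrder L] [OrderBot L] : TopologicalSpace (Quasipoint L) :=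
  TopologicalSpace.generateFrom (Set.range (Qset : L → Set (Quasipoint L)))

/-!
If `a ≰ b` in an orthomodular lattice, then `c = a ⊓ (a ⊓ b)ᗮ` is nonzero: otherwise taking
orthocomplements gives `aᗮ ⊔ (a ⊓ b) = ⊤`, and the orthomodular law yields `a ⊓ b = a`.
Since `c ≤ a` is disjoint from `b`, any quasipoint through `c` contains `a` but not `b`.
-/

namespace IsFilterBase

variable {L : Type*} [PartialOrder L] [OrderBot L] {B : Set L}

theorem singleton {a : L} (ha : a ≠ ⊥) : IsFilterBase ({a} : Set L) :=
  ⟨Set.singleton_nonempty a, ha.symm, directedOn_singleton (r := (· ≥ ·)) a⟩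

theorem sUnion {S : Set (Set L)} (hne : S.Nonempty) (hdir : DirectedOn (· ⊆ ·) S)
    (hS : ∀ B ∈ S, IsFilterBase B) : IsFilterBase (⋃₀ S) := by
  refine ⟨?_, ?_, Set.directedOn_sUnion (r := (· ≥ ·)) hdir fun B hB => (hS B hB).2.2⟩
  · obtain ⟨B, hB⟩ := hne
    exact (hS B hB).1.mono (Set.subset_sUnion_of_mem hB)
  · rintro ⟨B, hB, hbot⟩
    exact (hS B hB).2.1 hbot

protected theorem upperClosure (hB : IsFilterBase B) : IsFilterBase (upperClosure B : Set L) := by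
  obtain ⟨hne, hbot, hdir⟩ := hB
  refine ⟨hne.mono subset_upperClosure, ?_, ?_⟩
  · rintro ⟨x, hx, hx_le⟩
    exact hbot (le_bot_iff.1 hx_le ▸ hx)
  · rintro a ⟨x, hx, hxa⟩ b ⟨y, hy, hyb⟩
    obtain ⟨z, hz, hzx, hzy⟩ := hdir x hx y hy
    exact ⟨z, subset_upperClosure hz, hzx.trans hxa, hzy.trans hyb⟩

theorem not_disjoint (hB : IsFilterBase B) {a b : L} (ha : a ∈ B) (hb : b ∈ B) :
    ¬ Disjoint a b := by
  intro hab
  obtain ⟨c, hc, hca, hcb⟩ := hB.2.2 a ha b hb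
  exact hB.2.1 (le_bot_iff.1 (hab hca hcb) ▸ hc)

theorem exists_isQuasipoint_superset (hB : IsFilterBase B) :
    ∃ M : Set L, IsQuasipoint M ∧ B ⊆ M := by
  obtain ⟨M, hBM, hM⟩ := zorn_subset_nonempty {C : Set L | IsFilterBase C}
    (fun S hS hchain hne =>
      ⟨⋃₀ S, sUnion hne hchain.directedOn hS, fun _ => Set.subset_sUnion_of_mem⟩) B hB
  exact ⟨M, ⟨hM.prop, fun _ hC hMC => hM.eq_of_superset hC hMC⟩, hBM⟩

end IsFilterBase

section Separative

variable {L : Type*} [PartialOrder L] [OrderBot L]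

theorem IsQuasipoint.isUpperSet {B : Set L} (hB : IsQuasipoint B) : IsUpperSet B := by
  rw [← hB.2 _ hB.1.upperClosure subset_upperClosure]
  exact (upperClosure B).upper

theorem not_disjoint_of_qset_subset {a b c : L} (hab : Qset a ⊆ Qset b) (hca : c ≤ a)
    (hc : c ≠ ⊥) : ¬ Disjoint c b := by
  obtain ⟨B, hB, hcB⟩ := (IsFilterBase.singleton hc).exists_isQuasipoint_superset
  have hc_mem : c ∈ B := hcB rfl
  have ha_mem : a ∈ B := hB.isUpperSet hca hc_mem
  have hb_mem : b ∈ B := hab (a := ⟨B, hB⟩) ha_mem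
  exact hB.1.not_disjoint hc_mem hb_mem

/-- Separativity of a poset with least element, as in forcing: whenever `a ≰ b`, some nonzero
element below `a` is disjoint from `b`. It is what lets quasipoints detect the order. -/
def IsSeparative (L : Type*) [PartialOrder L] [OrderBot L] : Prop :=
  ∀ ⦃a b : L⦄, ¬ a ≤ b → ∃ c ≤ a, c ≠ ⊥ ∧ Disjoint c b

theorem qset_subset_imp_le_general (hL : IsSeparative L) (a b : L) :
    (Qset a ⊆ Qset b → a ≤ b) ∧ (Qset a = Qset b → a = b) := by
  have le_of_subset {x y : L} (hxy : Qset x ⊆ Qset y) : x ≤ y := by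
    by_contra hnle
    obtain ⟨c, hcx, hc, hcy⟩ := hL hnle
    exact not_disjoint_of_qset_subset hxy hcx hc hcy
  exact ⟨le_of_subset, fun h => (le_of_subset h.subset).antisymm (le_of_subset h.superset)⟩

end Separative

section Orthomodular

variable {L : Type*} [Lattice L] [BoundedOrder L] {oc : L → L}

theorem eq_of_le_of_inf_orthocompl_eq_bot
    (h_sup_compl : ∀ a : L, a ⊔ oc a = ⊤)
    (h_compl_inf : ∀ a b : L, oc (a ⊓ b) = oc a ⊔ oc b)
    (h_compl_compl : ∀ a : L, oc (oc a) = a)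
    (h_orthomodular : ∀ a b : L, b ≤ a → b = a ⊓ (oc a ⊔ b))
    {a b : L} (hba : b ≤ a) (h : a ⊓ oc b = ⊥) : b = a :=
  calc
    b = a ⊓ (oc a ⊔ b) := h_orthomodular a b hba
    _ = a ⊓ oc (a ⊓ oc b) := by rw [h_compl_inf, h_compl_compl]
    _ = a ⊓ (⊥ ⊔ oc ⊥) := by rw [h, bot_sup_eq]
    _ = a := by rw [h_sup_compl, inf_top_eq]

theorem isSeparative_of_orthomodular
    (h_inf_compl : ∀ a : L, a ⊓ oc a = ⊥)
    (h_sup_compl : ∀ a : L, a ⊔ oc a = ⊤)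
    (h_compl_inf : ∀ a b : L, oc (a ⊓ b) = oc a ⊔ oc b)
    (h_compl_compl : ∀ a : L, oc (oc a) = a)
    (h_orthomodular : ∀ a b : L, b ≤ a → b = a ⊓ (oc a ⊔ b)) :
    IsSeparative L := by
  intro a b hab
  refine ⟨a ⊓ oc (a ⊓ b), inf_le_left, fun hbot => hab ?_, disjoint_iff.2 ?_⟩
  · exact inf_eq_left.1 <| eq_of_le_of_inf_orthocompl_eq_bot h_sup_compl h_compl_inf
      h_compl_compl h_orthomodular inf_le_left hbot
  · rw [inf_right_comm, h_inf_compl]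

end Orthomodular

/-- In an orthomodular lattice, if every quasipoint containing `a` also contains `b`,
then `a ≤ b`; in particular `Qset a = Qset b` implies `a = b`. -/
theorem qset_subset_imp_le {L : Type*} [Lattice L] [BoundedOrder L]
    (oc : L → L)
    (h_inf_compl : ∀ a : L, a ⊓ oc a = ⊥)
    (h_sup_compl : ∀ a : L, a ⊔ oc a = ⊤)
    (h_compl_inf : ∀ a b : L, oc (a ⊓ b) = oc a ⊔ oc b)
    (h_compl_sup : ∀ a b : L, oc (a ⊔ b) = oc a ⊓ oc b)
    (h_compl_compl : ∀ a : L, oc (oc a) = a)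
    (h_orthomodular : ∀ a b : L, b ≤ a → b = a ⊓ (oc a ⊔ b))
    (a b : L) :
    (Qset a ⊆ Qset b → a ≤ b) ∧ (Qset a = Qset b → a = b) :=
  qset_subset_imp_le_general (isSeparative_of_orthomodular h_inf_compl h_sup_compl h_compl_inf
    h_compl_compl h_orthomodular) a b
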